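/- Let (Ω, μ) be a probability space, T : Ω → Ω an ergodic measure-preserving transformation, and {J_ω} the associated ergodic family of Jacobi operators with almost-sure spectrum Σ, Lyapunov exponent L, and A = lim_{n→∞}(a_1(ω)⋯a_n(ω))^{1/n} for μ-a.e. ω. Let λ_m = min Σ and λ_M = max Σ. If L(E) = 0 for every E ∈ Σ, then |Σ| ≤ 4A ≤ λ_M − λ_m; if in addition Σ is an interval, then λ_M − λ_m = |Σ| = 4A. -/

import Mathlib

open MeasureTheory Filter
open scoped ENNReal NNReal

noncomputable section

attribute [local instance] Matrix.normedAddCommGroup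

/-- The Hilbert space `ℓ²(ℕ)` (with complex scalars). -/
abbrev ellTwo : Type := lp (fun _ : ℕ => ℂ) 2

/-- The off-diagonal Jacobi coefficients of the ergodic family generated by the sampling
function `f` and the transformation `T`: `a_n(ω) = f(Tⁿ ω)` for `n ≥ 1`, and `a_0(ω) = 0`. -/
def jacobiA {Ω : Type*} (f : Ω → ℝ) (T : Ω → Ω) : ℕ → Ω → ℝ
  | 0, _ => 0
  | n + 1, ω => f (T^[n + 1] ω)

/-- The diagonal Jacobi coefficients of the ergodic family generated by the sampling
function `g` and the transformation `T`: `b_n(ω) = g(Tⁿ ω)` for `n ≥ 1`. -/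
def jacobiB {Ω : Type*} (g : Ω → ℝ) (T : Ω → Ω) (n : ℕ) (ω : Ω) : ℝ := g (T^[n] ω)

/-- `IsJacobiOp a b J` says that the bounded operator `J` on `ℓ²(ℕ)` acts as the Jacobi
matrix with off-diagonal coefficients `a` and diagonal coefficients `b`:
`(J ψ)_n = a_{n-1} ψ_{n-1} + b_n ψ_n + a_n ψ_{n+1}` for `n ≥ 1` (sites are indexed from `1`,
so that the `k`-th coordinate of `ℓ²(ℕ)`, `k = 0, 1, 2, …`, holds `ψ_{k+1}`; the convention
`a_0 = 0` renders the term `a_0 ψ_0` absent). -/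
def IsJacobiOp (a b : ℕ → ℝ) (J : ellTwo →L[ℂ] ellTwo) : Prop :=
  ∀ ψ : ellTwo, ∀ k : ℕ,
    (J ψ) k = (a k : ℂ) * (if k = 0 then 0 else ψ (k - 1)) + (b (k + 1) : ℂ) * ψ k
      + (a (k + 1) : ℂ) * ψ (k + 1)

/-- The one-step transfer matrix of the ergodic Jacobi family at energy `z` and site `n ≥ 1`:
`A_z at site n = (1 / a_n(ω)) · [[z - b_n(ω), -a_{n-1}(ω)], [a_n(ω), 0]]`. -/
def transferMatrix {Ω : Type*} (f g : Ω → ℝ) (T : Ω → Ω) (z : ℂ) (n : ℕ) (ω : Ω) :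
    Matrix (Fin 2) (Fin 2) ℂ :=
  ((jacobiA f T n ω : ℝ) : ℂ)⁻¹ •
    Matrix.of ![![z - (jacobiB g T n ω : ℂ), -((jacobiA f T (n - 1) ω : ℝ) : ℂ)],
                ![((jacobiA f T n ω : ℝ) : ℂ), 0]]

/-- The transfer matrix cocycle `A_z^n(ω) = A_z(T^{n-1}ω) ⋯ A_z(Tω) A_z(ω)`, i.e. the
product of the one-step transfer matrices at sites `n, n-1, …, 1`. -/
def transferCocycle {Ω : Type*} (f g : Ω → ℝ) (T : Ω → Ω) (z : ℂ) (ω : Ω) :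
    ℕ → Matrix (Fin 2) (Fin 2) ℂ
  | 0 => 1
  | n + 1 => transferMatrix f g T z (n + 1) ω * transferCocycle f g T z ω n

/-!
The first `n + 1` powers of `J` applied to the first basis vector are triangular with diagonal
`1, a₁, a₁a₂, …`, so a monic real polynomial `Q` of degree `n` satisfies
`a₁ ⋯ aₙ ≤ ‖Q(J)‖ = sup |Q|` over the spectrum. Rescaled Chebyshev polynomials then give
`4A ≤ λ_M - λ_m`.

For the upper bound, the entries of the transfer cocycle are the orthonormal polynomials `pₙ`, with
leading coefficient `(a₁ ⋯ aₙ)⁻¹`. By Fubini, vanishing of the Lyapunov exponent on `Σ` yields a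
single `ω` whose polynomials grow subexponentially at almost every point of `Σ`; hence up to a small
error `Σ` is contained in a sublevel set `|pₙ| ≤ exp (nδ)`, and Pólya's inequality bounds the
measure of such a set by `4 exp δ (a₁ ⋯ aₙ)^{1/n}`.
-/

open Polynomial

/-! ### The Pólya inequality -/

theorem lipschitzWith_measureReal_inter_Iic {K : Set ℝ} (hK : MeasurableSet K)
    (hfin : volume K ≠ ∞) : LipschitzWith 1 fun x => volume.real (K ∩ Set.Iic x) := by
  refine LipschitzWith.of_dist_le_mul fun x y => ?_
  have hsub : symmDiff (K ∩ Set.Iic x) (K ∩ Set.Iic y) ⊆ Set.uIcc x y := by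
    rintro z (⟨⟨hzK, hzx⟩, hz⟩ | ⟨⟨hzK, hzy⟩, hz⟩)
    · exact Set.mem_uIcc.2 (.inr ⟨(not_le.1 fun h => hz ⟨hzK, h⟩).le, hzx⟩)
    · exact Set.mem_uIcc.2 (.inl ⟨(not_le.1 fun h => hz ⟨hzK, h⟩).le, hzy⟩)
  have hmeas (t : ℝ) : NullMeasurableSet (K ∩ Set.Iic t) :=
    (hK.inter measurableSet_Iic).nullMeasurableSet
  have hne (t : ℝ) : volume (K ∩ Set.Iic t) ≠ ∞ :=
    measure_ne_top_of_subset Set.inter_subset_left hfin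
  calc dist (volume.real (K ∩ Set.Iic x)) (volume.real (K ∩ Set.Iic y))
      ≤ volume.real (symmDiff (K ∩ Set.Iic x) (K ∩ Set.Iic y)) :=
        abs_measureReal_sub_le_measureReal_symmDiff' (hmeas x) (hmeas y) (hne x) (hne y)
    _ ≤ volume.real (Set.uIcc x y) := measureReal_mono hsub isCompact_uIcc.measure_ne_top
    _ = (1 : ℝ≥0) * dist x y := by
        rw [Set.uIcc, Real.volume_real_Icc_of_le inf_le_sup, NNReal.coe_one, one_mul, dist_comm,
          Real.dist_eq, max_sub_min_eq_abs]

theorem exists_mem_measureReal_inter_Iic_eq {K : Set ℝ} (hK : IsCompact K) (hne : K.Nonempty)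
    {t : ℝ} (ht : t ∈ Set.Icc 0 (volume.real K)) : ∃ x ∈ K, volume.real (K ∩ Set.Iic x) = t := by
  have hcont : Continuous fun x => volume.real (K ∩ Set.Iic x) :=
    (lipschitzWith_measureReal_inter_Iic hK.measurableSet hK.measure_ne_top).continuous
  have hleft : volume.real (K ∩ Set.Iic (sInf K)) = 0 := by
    have hsub : K ∩ Set.Iic (sInf K) ⊆ {sInf K} := fun z hz =>
      le_antisymm hz.2 (csInf_le hK.bddBelow hz.1)
    rw [measureReal_def, measure_mono_null hsub (measure_singleton _), ENNReal.toReal_zero]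
  have hright : K ∩ Set.Iic (sSup K) = K :=
    Set.inter_eq_left.2 fun z hz => le_csSup hK.bddAbove hz
  have hle : sInf K ≤ sSup K := csInf_le_csSup hne hK.bddBelow hK.bddAbove
  obtain ⟨y, hy, rfl⟩ := intermediate_value_Icc hle hcont.continuousOn <| by
    rwa [hleft, hright]
  have hcomp : IsCompact (K ∩ Set.Iic y) := hK.inter_right isClosed_Iic
  obtain ⟨x, hx, hmax⟩ := hcomp.exists_isGreatest ⟨sInf K, hK.sInf_mem hne, hy.1⟩
  refine ⟨x, hx.1, congrArg volume.real (Set.Subset.antisymm ?_ ?_)⟩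
  · exact Set.inter_subset_inter_right K (Set.Iic_subset_Iic.2 hx.2)
  · exact fun z hz => ⟨hz.1, hmax hz⟩

-- `x i` is chosen so that the part of `K` to its left has measure `|K| (1 + y i) / 2`.
theorem exists_mem_mul_abs_sub_le {ι : Type*} {K : Set ℝ} (hK : IsCompact K) (hne : K.Nonempty)
    {y : ι → ℝ} (hy : ∀ i, y i ∈ Set.Icc (-1) 1) :
    ∃ x : ι → ℝ, (∀ i, x i ∈ K) ∧ ∀ i j, volume.real K / 2 * |y i - y j| ≤ |x i - x j| := by
  have hpoint (i : ι) : ∃ x ∈ K, volume.real (K ∩ Set.Iic x) = volume.real K / 2 * (1 + y i) := by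
    have hm : 0 ≤ volume.real K := measureReal_nonneg
    refine exists_mem_measureReal_inter_Iic_eq hK hne ⟨?_, ?_⟩
    · exact mul_nonneg (by positivity) (by linarith [(hy i).1])
    · nlinarith [(hy i).2]
  choose x hxK hx using hpoint
  refine ⟨x, hxK, fun i j => ?_⟩
  have hdist := (lipschitzWith_measureReal_inter_Iic hK.measurableSet
    hK.measure_ne_top).dist_le_mul (x i) (x j)
  rwa [hx, hx, Real.dist_eq, ← mul_sub, add_sub_add_left_eq_sub, abs_mul,
    abs_of_nonneg (by positivity), NNReal.coe_one, one_mul, Real.dist_eq] at hdist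

theorem abs_coeff_le_mul_sum_prod_inv {ι : Type*} [DecidableEq ι] {s : Finset ι} {x : ι → ℝ}
    (hx : Set.InjOn x s) {P : ℝ[X]} (hP : P.degree < s.card) {r : ℝ}
    (hr : ∀ i ∈ s, |P.eval (x i)| ≤ r) :
    |P.coeff (s.card - 1)| ≤ r * ∑ i ∈ s, ∏ j ∈ s.erase i, |x i - x j|⁻¹ := by
  rw [Lagrange.coeff_eq_sum hx hP, Finset.mul_sum]
  refine (Finset.abs_sum_le_sum_abs _ _).trans (Finset.sum_le_sum fun i hi => ?_)
  rw [abs_div, div_eq_mul_inv, Finset.abs_prod, ← Finset.prod_inv_distrib]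
  exact mul_le_mul_of_nonneg_right (hr i hi) (Finset.prod_nonneg fun _ _ => by positivity)

theorem abs_coeff_le_of_mul_abs_sub_le {ι : Type*} [DecidableEq ι] {s : Finset ι} {x y : ι → ℝ}
    (hy : Set.InjOn y s) {c : ℝ} (hc : 0 < c) (hxy : ∀ i j, c * |y i - y j| ≤ |x i - x j|)
    {P : ℝ[X]} (hP : P.degree < s.card) {r : ℝ} (hr : 0 ≤ r) (hPr : ∀ i ∈ s, |P.eval (x i)| ≤ r) :
    |P.coeff (s.card - 1)| ≤
      r * (c⁻¹ ^ (s.card - 1) * ∑ i ∈ s, ∏ j ∈ s.erase i, |y i - y j|⁻¹) := by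
  have hpos : ∀ i ∈ s, ∀ j ∈ s, j ≠ i → 0 < c * |y i - y j| := fun i hi j hj hji =>
    mul_pos hc <| abs_pos.2 <| sub_ne_zero.2 fun h => hji (hy hj hi h.symm)
  have hx : Set.InjOn x s := fun i hi j hj h => by
    by_contra hij
    exact ((hpos i hi j hj (Ne.symm hij)).trans_le (hxy i j)).ne' (by rw [h, sub_self, abs_zero])
  refine (abs_coeff_le_mul_sum_prod_inv hx hP hPr).trans (mul_le_mul_of_nonneg_left ?_ hr)
  rw [Finset.mul_sum]
  refine Finset.sum_le_sum fun i hi => ?_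
  calc ∏ j ∈ s.erase i, |x i - x j|⁻¹
      ≤ ∏ j ∈ s.erase i, c⁻¹ * |y i - y j|⁻¹ := by
        refine Finset.prod_le_prod (fun j _ => by positivity) fun j hj => ?_
        rw [← mul_inv]
        exact inv_anti₀ (hpos i hi j (Finset.mem_of_mem_erase hj) (Finset.ne_of_mem_erase hj))
          (hxy i j)
    _ = c⁻¹ ^ (s.card - 1) * ∏ j ∈ s.erase i, |y i - y j|⁻¹ := by
        rw [Finset.prod_mul_distrib, Finset.prod_const, Finset.card_erase_of_mem hi]

theorem sum_prod_inv_abs_chebyshevNode_sub (n : ℕ) :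
    ∑ i ∈ Finset.range (n + 1), ∏ j ∈ (Finset.range (n + 1)).erase i,
      |Chebyshev.node n i - Chebyshev.node n j|⁻¹ = 2 ^ (n - 1) := by
  have hdeg : (Chebyshev.T ℝ n).degree < (Finset.range (n + 1)).card := by
    rw [Finset.card_range, Chebyshev.degree_T]
    exact_mod_cast Nat.lt_succ_self n
  have hcoeff : (Chebyshev.T ℝ n).coeff ((Finset.range (n + 1)).card - 1) = 2 ^ (n - 1) := by
    have h := Chebyshev.leadingCoeff_T ℝ (n : ℤ)
    rw [leadingCoeff, Chebyshev.natDegree_T] at h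
    simpa using h
  rw [← hcoeff, Lagrange.coeff_eq_sum (Chebyshev.strictAntiOn_node n).injOn hdeg]
  refine Finset.sum_congr rfl fun i hi => ?_
  have hin : i ≤ n := Nat.lt_succ_iff.1 (Finset.mem_range.1 hi)
  have hpos := Chebyshev.zero_lt_prod_node_sub_node hin
  -- `T n` alternates in sign at its nodes, exactly as the products of the node differences do.
  rw [Chebyshev.eval_T_real_node (Finset.mem_Iic.2 hin), Finset.prod_inv_distrib,
    ← Finset.abs_prod]
  rcases neg_one_pow_eq_or ℝ i with h | h <;> rw [h] at hpos ⊢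
  · rw [abs_of_pos (by linarith), one_div]
  · rw [abs_of_neg (by linarith), inv_neg, neg_div, one_div]

theorem polya_inequality {n : ℕ} (hn : n ≠ 0) {P : ℝ[X]} (hP : P.degree ≤ n) {K : Set ℝ}
    (hK : IsCompact K) {r : ℝ} (hr : 0 ≤ r) (hPr : ∀ x ∈ K, |P.eval x| ≤ r) :
    2 * (|P.coeff n| * volume.real K ^ n) ≤ r * 4 ^ n := by
  rcases (measureReal_nonneg (μ := volume) (s := K)).eq_or_lt with hm | hm
  · rw [← hm, zero_pow hn, mul_zero, mul_zero]
    positivity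
  have hne : K.Nonempty := Set.nonempty_iff_ne_empty.2 fun h => by simp [h] at hm
  set m := volume.real K
  obtain ⟨x, hxK, hsep⟩ := exists_mem_mul_abs_sub_le hK hne fun i =>
    Chebyshev.node_mem_Icc (n := n) (i := i)
  have hinj : Set.InjOn (fun i => Chebyshev.node n i) (Finset.range (n + 1)) :=
    (Chebyshev.strictAntiOn_node n).injOn
  have hcoeff : |P.coeff n| ≤ r * ((m / 2)⁻¹ ^ n * 2 ^ (n - 1)) := by
    have hdeg : P.degree < (Finset.range (n + 1)).card := by
      rw [Finset.card_range]
      exact hP.trans_lt (by exact_mod_cast Nat.lt_succ_self n)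
    have h := abs_coeff_le_of_mul_abs_sub_le hinj (half_pos hm) hsep hdeg hr
      fun i _ => hPr _ (hxK i)
    rwa [sum_prod_inv_abs_chebyshevNode_sub, Finset.card_range, Nat.add_sub_cancel] at h
  calc 2 * (|P.coeff n| * m ^ n)
      ≤ 2 * (r * ((m / 2)⁻¹ ^ n * 2 ^ (n - 1)) * m ^ n) := by gcongr
    _ = r * (2 * 2 ^ (n - 1) * ((m / 2)⁻¹ * m) ^ n) := by rw [mul_pow]; ring
    _ = r * 4 ^ n := by
        rw [mul_pow_sub_one hn, inv_div, div_mul_cancel₀ _ hm.ne', ← mul_pow]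
        norm_num

theorem measureReal_le_of_forall_abs_eval_le {n : ℕ} (hn : n ≠ 0) {P : ℝ[X]} (hP : P.degree ≤ n)
    (hcoeff : P.coeff n ≠ 0) {K : Set ℝ} (hK : IsCompact K) {t : ℝ}
    (hPt : ∀ x ∈ K, |P.eval x| ≤ Real.exp (n * t)) :
    volume.real K ≤ 4 * Real.exp t * |P.coeff n|⁻¹ ^ (n : ℝ)⁻¹ := by
  have hc : 0 < |P.coeff n| := abs_pos.2 hcoeff
  refine le_of_pow_le_pow_left₀ hn (by positivity) ?_
  rw [mul_pow, mul_pow, Real.rpow_inv_natCast_pow (by positivity) hn, ← Real.exp_nat_mul,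
    ← div_eq_mul_inv, le_div_iff₀ hc]
  have hpos : 0 ≤ |P.coeff n| * volume.real K ^ n := by positivity
  linarith [polya_inequality hn hP hK (Real.exp_pos _).le hPt]

/-! ### Subexponential growth -/

theorem measure_le_of_ae_eventually_mem {α : Type*} [MeasurableSpace α] {ν : Measure α} {s : Set α}
    {t : ℕ → Set α} (hs : ∀ᵐ x ∂ν, x ∈ s → ∀ᶠ n in atTop, x ∈ t n) {u : ℕ → ℝ≥0∞} {c : ℝ≥0∞}
    (ht : ∀ᶠ n in atTop, ν (t n) ≤ u n) (hu : Tendsto u atTop (nhds c)) : ν s ≤ c := by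
  have hmono : Monotone fun N : ℕ => ⋂ n ≥ N, t n := fun N N' hN =>
    Set.biInter_subset_biInter_left fun n hn => le_trans hN hn
  have hcover : s ≤ᵐ[ν] ⋃ N : ℕ, ⋂ n ≥ N, t n := by
    filter_upwards [hs] with x hx hxs
    obtain ⟨N, hN⟩ := eventually_atTop.1 (hx hxs)
    exact Set.mem_iUnion.2 ⟨N, Set.mem_iInter₂.2 hN⟩
  calc ν s ≤ ν (⋃ N : ℕ, ⋂ n ≥ N, t n) := measure_mono_ae hcover
    _ = ⨆ N : ℕ, ν (⋂ n ≥ N, t n) := hmono.measure_iUnion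
    _ ≤ c := iSup_le fun N => ge_of_tendsto hu <| by
        filter_upwards [ht, eventually_ge_atTop N] with n hn hNn
        exact (measure_mono (Set.biInter_subset_of_mem hNn)).trans hn

/-- The sequence `u` grows subexponentially: `limsup (1/n) log ‖u n‖ ≤ 0`, phrased without
logarithms so that vanishing terms need no separate treatment. -/
def HasSubexponentialGrowth {E : Type*} [Norm E] (u : ℕ → E) : Prop :=
  ∀ δ : ℝ, 0 < δ → ∀ᶠ n : ℕ in atTop, ‖u n‖ ≤ Real.exp (n * δ)

namespace HasSubexponentialGrowth

theorem of_tendsto_log_norm_div {E : Type*} [Norm E] {u : ℕ → E}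
    (hu : Tendsto (fun n : ℕ => Real.log ‖u n‖ / n) atTop (nhds 0)) :
    HasSubexponentialGrowth u := by
  intro δ hδ
  filter_upwards [hu.eventually_lt_const hδ, eventually_gt_atTop 0] with n hn hnpos
  rw [div_lt_iff₀' (Nat.cast_pos.2 hnpos)] at hn
  exact (Real.le_exp_log _).trans (Real.exp_le_exp.2 hn.le)

theorem mono {E F : Type*} [Norm E] [Norm F] {u : ℕ → E} {v : ℕ → F}
    (hu : HasSubexponentialGrowth u) (hvu : ∀ n, ‖v n‖ ≤ ‖u n‖) : HasSubexponentialGrowth v :=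
  fun δ hδ => (hu δ hδ).mono fun n hn => (hvu n).trans hn

end HasSubexponentialGrowth

theorem volume_le_of_ae_hasSubexponentialGrowth {P : ℕ → ℝ[X]} (hP : ∀ n, (P n).degree ≤ n)
    (hcoeff : ∀ n, (P n).coeff n ≠ 0) {A : ℝ}
    (hA : Tendsto (fun n : ℕ => |(P n).coeff n|⁻¹ ^ (n : ℝ)⁻¹) atTop (nhds A))
    {S : Set ℝ} (hS : IsCompact S)
    (hgrowth : ∀ᵐ x, x ∈ S → HasSubexponentialGrowth fun n => (P n).eval x) :
    volume S ≤ ENNReal.ofReal (4 * A) := by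
  have hbound (δ : ℝ) (hδ : 0 < δ) : volume S ≤ ENNReal.ofReal (4 * Real.exp δ * A) := by
    let K (n : ℕ) : Set ℝ := S ∩ {x | |(P n).eval x| ≤ Real.exp (n * δ)}
    have hK (n : ℕ) : IsCompact (K n) :=
      hS.inter_right (isClosed_le (P n).continuous.abs continuous_const)
    refine measure_le_of_ae_eventually_mem (t := K) ?_ ?_
      (ENNReal.tendsto_ofReal (hA.const_mul (4 * Real.exp δ)))
    · filter_upwards [hgrowth] with x hx hxS
      exact (hx hxS δ hδ).mono fun n hn => ⟨hxS, hn⟩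
    · filter_upwards [eventually_ne_atTop 0] with n hn
      rw [← ofReal_measureReal (hK n).measure_ne_top]
      exact ENNReal.ofReal_le_ofReal <|
        measureReal_le_of_forall_abs_eval_le hn (hP n) (hcoeff n) (hK n) fun x hx => hx.2
  have hlim : Tendsto (fun δ => ENNReal.ofReal (4 * Real.exp δ * A)) (nhdsWithin 0 (Set.Ioi 0))
      (nhds (ENNReal.ofReal (4 * Real.exp 0 * A))) :=
    (ENNReal.continuous_ofReal.comp (by fun_prop)).continuousWithinAt
  rw [Real.exp_zero, mul_one] at hlim
  exact ge_of_tendsto hlim (eventually_mem_nhdsWithin.mono hbound)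

/-! ### Jacobi operators -/

theorem exists_monic_abs_eval_le_on_Icc {n : ℕ} (hn : n ≠ 0) (u v : ℝ) :
    ∃ Q : ℝ[X], Q.Monic ∧ Q.natDegree = n ∧
      ∀ x ∈ Set.Icc u v, |Q.eval x| ≤ 2 * ((v - u) / 4) ^ n := by
  rcases lt_or_ge u v with huv | hvu
  · have hd : 0 < v - u := sub_pos.2 huv
    have hslope : 2 / (v - u) ≠ 0 := by positivity
    have hscale : 2 * ((v - u) / 4) ^ n ≠ 0 := by positivity
    let l : ℝ[X] := C (2 / (v - u)) * X + C (-(u + v) / (v - u))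
    have hl : l.natDegree = 1 := natDegree_linear hslope
    have hT : (Chebyshev.T ℝ n).natDegree = n := by
      rw [Chebyshev.natDegree_T, Int.natAbs_natCast]
    have hlead : ((Chebyshev.T ℝ n).comp l).leadingCoeff = (2 * ((v - u) / 4) ^ n)⁻¹ := by
      rw [leadingCoeff_comp (by rw [hl]; exact one_ne_zero), leadingCoeff_linear hslope, hT,
        Chebyshev.leadingCoeff_T, Int.natAbs_natCast]
      apply eq_inv_of_mul_eq_one_left
      calc 2 ^ (n - 1) * (2 / (v - u)) ^ n * (2 * ((v - u) / 4) ^ n)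
          = 2 * 2 ^ (n - 1) * (2 / (v - u) * ((v - u) / 4)) ^ n := by rw [mul_pow]; ring
        _ = 1 := by
          rw [mul_pow_sub_one hn, ← mul_pow, ← mul_div_assoc, div_mul_cancel₀ _ hd.ne']
          norm_num
    refine ⟨C (2 * ((v - u) / 4) ^ n) * (Chebyshev.T ℝ n).comp l, ?_, ?_, fun x hx => ?_⟩
    · rw [Monic, leadingCoeff_mul, leadingCoeff_C, hlead, mul_inv_cancel₀ hscale]
    · rw [natDegree_C_mul hscale, natDegree_comp, hT, hl, mul_one]
    · have hlx : |l.eval x| ≤ 1 := by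
        have heval : l.eval x = (2 * x - (u + v)) / (v - u) := by
          simp only [l, eval_add, eval_mul, eval_C, eval_X]
          ring
        rw [heval, abs_le, le_div_iff₀ hd, div_le_iff₀ hd]
        constructor <;> linarith [hx.1, hx.2]
      rw [eval_mul, eval_C, eval_comp, abs_mul, abs_of_pos (by positivity)]
      exact mul_le_of_le_one_right (by positivity) (Chebyshev.abs_eval_T_real_le_one n hlx)
  · refine ⟨(X - C u) ^ n, (monic_X_sub_C u).pow n, by simp, fun x hx => ?_⟩
    obtain rfl : u = v := le_antisymm (hx.1.trans hx.2) hvu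
    obtain rfl : x = u := le_antisymm hx.2 hx.1
    simp [hn]

theorem norm_aeval_le_of_forall_mem_spectrum {𝒜 : Type*} [CStarAlgebra 𝒜] {x : 𝒜}
    (hx : IsSelfAdjoint x) {Q : ℝ[X]} {c : ℝ} (hc : 0 ≤ c)
    (hQ : ∀ t ∈ spectrum ℝ x, |Q.eval t| ≤ c) : ‖aeval x Q‖ ≤ c := by
  rw [← cfc_polynomial Q x hx]
  exact norm_cfc_le hc hQ

/-- The first vector of the standard basis of `ℓ²(ℕ)`, cyclic for Jacobi operators. -/
def firstBasisVector : ellTwo := lp.single 2 0 1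

theorem norm_firstBasisVector : ‖firstBasisVector‖ = 1 := by
  rw [firstBasisVector, lp.norm_single (by norm_num), norm_one]

instance : Nontrivial ellTwo :=
  nontrivial_of_ne firstBasisVector 0 <| norm_ne_zero_iff.1 <| by
    rw [norm_firstBasisVector]; exact one_ne_zero

-- Stated for an abstract C⋆-algebra since on `ellTwo →L[ℂ] ellTwo` instance search meets a
-- different (defeq) real algebra structure and misses the real functional calculus.
theorem spectrum_real_nonempty_of_isSelfAdjoint {𝒜 : Type*} [CStarAlgebra 𝒜] [Nontrivial 𝒜]
    {x : 𝒜} (hx : IsSelfAdjoint x) : (spectrum ℝ x).Nonempty :=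
  ContinuousFunctionalCalculus.spectrum_nonempty x hx

namespace IsJacobiOp

variable {a b : ℕ → ℝ} {J : ellTwo →L[ℂ] ellTwo}

theorem pow_firstBasisVector_apply_of_lt (hJ : IsJacobiOp a b J) {k j : ℕ} (hkj : k < j) :
    (J ^ k) firstBasisVector j = 0 := by
  induction k generalizing j with
  | zero => simp [firstBasisVector, lp.single_apply, hkj.ne']
  | succ k ih =>
    rw [pow_succ', mul_apply_eq_comp, hJ, ih (by omega), ih (by omega),
      if_neg (by omega), ih (by omega), mul_zero, mul_zero, mul_zero, add_zero, add_zero]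

theorem pow_firstBasisVector_apply_self (hJ : IsJacobiOp a b J) (k : ℕ) :
    (J ^ k) firstBasisVector k = ((∏ i ∈ Finset.Icc 1 k, a i : ℝ) : ℂ) := by
  induction k with
  | zero => simp [firstBasisVector, lp.single_apply]
  | succ k ih =>
    rw [pow_succ', mul_apply_eq_comp, hJ, if_neg k.succ_ne_zero,
      Nat.add_sub_cancel, ih, hJ.pow_firstBasisVector_apply_of_lt (by omega),
      hJ.pow_firstBasisVector_apply_of_lt (by omega), mul_zero, mul_zero, add_zero, add_zero,
      Finset.prod_Icc_succ_top (by omega)]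
    push_cast
    ring

theorem aeval_firstBasisVector_apply (hJ : IsJacobiOp a b J) {n : ℕ} {Q : ℝ[X]}
    (hQ : Q.natDegree ≤ n) :
    aeval J Q firstBasisVector n = ((Q.coeff n * ∏ i ∈ Finset.Icc 1 n, a i : ℝ) : ℂ) := by
  have hterm (i : ℕ) : (Q.coeff i • J ^ i) firstBasisVector n =
      (Q.coeff i : ℂ) * (J ^ i) firstBasisVector n := by
    rw [smul_apply, lp.coeFn_smul, Pi.smul_apply, Complex.real_smul]
  have hlow : ∀ i ∈ Finset.range n, (Q.coeff i • J ^ i) firstBasisVector n = 0 := fun i hi => by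
    rw [hterm, hJ.pow_firstBasisVector_apply_of_lt (Finset.mem_range.1 hi), mul_zero]
  rw [aeval_eq_sum_range' (Nat.lt_succ_of_le hQ), sum_apply, lp.coeFn_sum, Finset.sum_apply,
    Finset.sum_range_succ, Finset.sum_eq_zero hlow, zero_add, hterm,
    hJ.pow_firstBasisVector_apply_self, Complex.ofReal_mul]

theorem abs_coeff_mul_prod_le (hJ : IsJacobiOp a b J) (hsa : IsSelfAdjoint J) {n : ℕ} {Q : ℝ[X]}
    (hQ : Q.natDegree ≤ n) {c : ℝ} (hc : 0 ≤ c) (hQc : ∀ x ∈ spectrum ℝ J, |Q.eval x| ≤ c) :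
    |Q.coeff n * ∏ i ∈ Finset.Icc 1 n, a i| ≤ c :=
  calc |Q.coeff n * ∏ i ∈ Finset.Icc 1 n, a i| = ‖aeval J Q firstBasisVector n‖ := by
        rw [hJ.aeval_firstBasisVector_apply hQ, Complex.norm_real, Real.norm_eq_abs]
    _ ≤ ‖aeval J Q firstBasisVector‖ := lp.norm_apply_le_norm two_ne_zero _ n
    _ ≤ ‖aeval J Q‖ * ‖firstBasisVector‖ := (aeval J Q).le_opNorm _
    _ = ‖aeval J Q‖ := by rw [norm_firstBasisVector, mul_one]
    _ ≤ c := norm_aeval_le_of_forall_mem_spectrum hsa hc hQc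

theorem abs_prod_le (hJ : IsJacobiOp a b J) (hsa : IsSelfAdjoint J) {u v : ℝ} (huv : u ≤ v)
    (hspec : spectrum ℝ J ⊆ Set.Icc u v) {n : ℕ} (hn : n ≠ 0) :
    |∏ i ∈ Finset.Icc 1 n, a i| ≤ 2 * ((v - u) / 4) ^ n := by
  obtain ⟨Q, hmonic, hdeg, hQ⟩ := exists_monic_abs_eval_le_on_Icc hn u v
  have hcoeff : Q.coeff n = 1 := hdeg ▸ hmonic.coeff_natDegree
  have : 0 ≤ v - u := sub_nonneg.2 huv
  simpa only [hcoeff, one_mul] using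
    hJ.abs_coeff_mul_prod_le hsa hdeg.le (by positivity) fun x hx => hQ x (hspec hx)

theorem four_mul_le_sSup_sub_sInf_spectrum (hJ : IsJacobiOp a b J) (hsa : IsSelfAdjoint J) {A : ℝ}
    (hA : Tendsto (fun n : ℕ => |∏ i ∈ Finset.Icc 1 n, a i| ^ (n : ℝ)⁻¹) atTop (nhds A)) :
    4 * A ≤ sSup (spectrum ℝ J) - sInf (spectrum ℝ J) := by
  have hcomp : IsCompact (spectrum ℝ J) := spectrum.isCompact J
  have hne : (spectrum ℝ J).Nonempty := spectrum_real_nonempty_of_isSelfAdjoint hsa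
  have hle := csInf_le_csSup hne hcomp.bddBelow hcomp.bddAbove
  set d := sSup (spectrum ℝ J) - sInf (spectrum ℝ J)
  have : 0 ≤ d := sub_nonneg.2 hle
  have hroot (n : ℕ) (hn : n ≠ 0) :
      |∏ i ∈ Finset.Icc 1 n, a i| ^ (n : ℝ)⁻¹ ≤ 2 ^ (n : ℝ)⁻¹ * (d / 4) := by
    refine le_of_pow_le_pow_left₀ hn (by positivity) ?_
    rw [mul_pow, Real.rpow_inv_natCast_pow (abs_nonneg _) hn,
      Real.rpow_inv_natCast_pow zero_le_two hn]
    exact hJ.abs_prod_le hsa hle (subset_Icc_csInf_csSup hcomp.bddBelow hcomp.bddAbove) hn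
  have hlim : Tendsto (fun n : ℕ => (2 : ℝ) ^ (n : ℝ)⁻¹ * (d / 4)) atTop
      (nhds (2 ^ (0 : ℝ) * (d / 4))) :=
    ((Real.continuousAt_const_rpow two_ne_zero).tendsto.comp
      tendsto_inv_atTop_nhds_zero_nat).mul_const _
  have hAd := le_of_tendsto_of_tendsto hA hlim ((eventually_ne_atTop 0).mono hroot)
  rw [Real.rpow_zero] at hAd
  linarith

end IsJacobiOp

/-! ### Orthonormal polynomials and transfer matrices -/

/-- The orthonormal polynomials of the Jacobi matrix with off-diagonal entries `a 1, a 2, …` and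
diagonal entries `b 1, b 2, …`; the values `a 0` and `b 0` are ignored. -/
def orthonormalPoly (a b : ℕ → ℝ) : ℕ → ℝ[X]
  | 0 => 1
  | 1 => C (a 1)⁻¹ * (X - C (b 1))
  | n + 2 => C (a (n + 2))⁻¹ *
      ((X - C (b (n + 2))) * orthonormalPoly a b (n + 1) - C (a (n + 1)) * orthonormalPoly a b n)

theorem natDegree_orthonormalPoly_le (a b : ℕ → ℝ) : ∀ n, (orthonormalPoly a b n).natDegree ≤ n
  | 0 => natDegree_one.le
  | 1 => (natDegree_C_mul_le _ _).trans (natDegree_X_sub_C_le _)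
  | n + 2 => by
    have hn := natDegree_orthonormalPoly_le a b n
    have hn1 := natDegree_orthonormalPoly_le a b (n + 1)
    refine (natDegree_C_mul_le _ _).trans <| (natDegree_sub_le _ _).trans <| max_le ?_ ?_
    · exact (natDegree_mul_le_of_le (natDegree_X_sub_C_le _) hn1).trans (by omega)
    · exact (natDegree_C_mul_le _ _).trans (by omega)

theorem coeff_orthonormalPoly_self (a b : ℕ → ℝ) :
    ∀ n, (orthonormalPoly a b n).coeff n = (∏ i ∈ Finset.Icc 1 n, a i)⁻¹
  | 0 => by simp [orthonormalPoly]
  | 1 => by simp [orthonormalPoly]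
  | n + 2 => by
    have hlow (k m : ℕ) (hkm : k < m) : (orthonormalPoly a b k).coeff m = 0 :=
      coeff_eq_zero_of_natDegree_lt ((natDegree_orthonormalPoly_le a b k).trans_lt hkm)
    rw [orthonormalPoly, coeff_C_mul, coeff_sub, sub_mul, coeff_sub, coeff_X_mul, coeff_C_mul,
      coeff_C_mul, hlow (n + 1) (n + 2) (by omega), hlow n (n + 2) (by omega),
      coeff_orthonormalPoly_self a b (n + 1), mul_zero, mul_zero, sub_zero, sub_zero,
      Finset.prod_Icc_succ_top (b := n + 1) (by omega), mul_inv_rev]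

section TransferCocycle

variable {Ω : Type*} {f g : Ω → ℝ} {T : Ω → Ω}

theorem jacobiA_pos (hf : ∀ ω, 0 < f ω) {n : ℕ} (hn : n ≠ 0) (ω : Ω) : 0 < jacobiA f T n ω := by
  obtain ⟨k, rfl⟩ := Nat.exists_eq_succ_of_ne_zero hn
  exact hf _

theorem prod_jacobiA_pos (hf : ∀ ω, 0 < f ω) (n : ℕ) (ω : Ω) :
    0 < ∏ i ∈ Finset.Icc 1 n, jacobiA f T i ω :=
  Finset.prod_pos fun _ hi => jacobiA_pos hf (Nat.one_le_iff_ne_zero.1 (Finset.mem_Icc.1 hi).1) ω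

theorem transferCocycle_succ_zero_zero (z : ℂ) (ω : Ω) (n : ℕ) :
    transferCocycle f g T z ω (n + 1) 0 0 = (jacobiA f T (n + 1) ω : ℂ)⁻¹ *
      ((z - jacobiB g T (n + 1) ω) * transferCocycle f g T z ω n 0 0
        - jacobiA f T n ω * transferCocycle f g T z ω n 1 0) := by
  simp only [transferCocycle, transferMatrix, Matrix.smul_apply, Matrix.mul_apply,
    Fin.sum_univ_two, Matrix.of_apply, Matrix.cons_val_zero, Matrix.cons_val_one,
    Nat.add_sub_cancel, smul_eq_mul]
  ring

theorem transferCocycle_succ_one_zero (hf : ∀ ω, f ω ≠ 0) (z : ℂ) (ω : Ω) (n : ℕ) :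
    transferCocycle f g T z ω (n + 1) 1 0 = transferCocycle f g T z ω n 0 0 := by
  have ha : (jacobiA f T (n + 1) ω : ℂ) ≠ 0 := Complex.ofReal_ne_zero.2 (hf _)
  simp [transferCocycle, transferMatrix, Matrix.mul_apply, Fin.sum_univ_two, ha]

theorem transferCocycle_zero_zero_eq_aeval (hf : ∀ ω, f ω ≠ 0) (z : ℂ) (ω : Ω) :
    ∀ n, transferCocycle f g T z ω n 0 0 =
      aeval z (orthonormalPoly (fun k => jacobiA f T k ω) (fun k => jacobiB g T k ω) n)
  | 0 => by simp [transferCocycle, orthonormalPoly]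
  | 1 => by
    rw [transferCocycle_succ_zero_zero]
    simp [transferCocycle, orthonormalPoly]
  | n + 2 => by
    rw [transferCocycle_succ_zero_zero, transferCocycle_succ_one_zero hf,
      transferCocycle_zero_zero_eq_aeval hf z ω (n + 1),
      transferCocycle_zero_zero_eq_aeval hf z ω n]
    simp [orthonormalPoly]

theorem norm_eval_orthonormalPoly_le (hf : ∀ ω, f ω ≠ 0) (E : ℝ) (ω : Ω) (n : ℕ) :
    ‖(orthonormalPoly (fun k => jacobiA f T k ω) (fun k => jacobiB g T k ω) n).eval E‖ ≤
      ‖transferCocycle f g T E ω n‖ := by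
  set P := orthonormalPoly (fun k => jacobiA f T k ω) (fun k => jacobiB g T k ω) n
  calc ‖P.eval E‖ = ‖transferCocycle f g T E ω n 0 0‖ := by
        rw [transferCocycle_zero_zero_eq_aeval hf, ← Complex.coe_algebraMap,
          aeval_algebraMap_apply_eq_algebraMap_eval, norm_algebraMap']
    _ ≤ ‖transferCocycle f g T E ω n‖ := Matrix.norm_entry_le_entrywise_sup_norm _

theorem hasSubexponentialGrowth_eval_orthonormalPoly (hf : ∀ ω, f ω ≠ 0) {E : ℝ} {ω : Ω}
    (hlyap : Tendsto (fun n : ℕ => Real.log ‖transferCocycle f g T E ω n‖ / n) atTop (nhds 0)) :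
    HasSubexponentialGrowth fun n =>
      (orthonormalPoly (fun k => jacobiA f T k ω) (fun k => jacobiB g T k ω) n).eval E :=
  (HasSubexponentialGrowth.of_tendsto_log_norm_div hlyap).mono
    (norm_eval_orthonormalPoly_le hf E ω)

theorem volume_le_of_ae_tendsto_log_norm_transferCocycle (hf : ∀ ω, 0 < f ω) {ω : Ω} {A : ℝ}
    (hA : Tendsto (fun n : ℕ => (∏ i ∈ Finset.Icc 1 n, jacobiA f T i ω) ^ (n : ℝ)⁻¹) atTop (nhds A))
    {S : Set ℝ} (hS : IsCompact S)
    (hlyap : ∀ᵐ E : ℝ ∂volume.restrict S, Tendsto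
      (fun n : ℕ => Real.log ‖transferCocycle f g T E ω n‖ / n) atTop (nhds 0)) :
    volume S ≤ ENNReal.ofReal (4 * A) := by
  let P := orthonormalPoly (fun k => jacobiA f T k ω) (fun k => jacobiB g T k ω)
  have hcoeff (n : ℕ) : |(P n).coeff n|⁻¹ = ∏ i ∈ Finset.Icc 1 n, jacobiA f T i ω := by
    rw [coeff_orthonormalPoly_self, abs_inv, inv_inv, abs_of_pos (prod_jacobiA_pos hf n ω)]
  refine volume_le_of_ae_hasSubexponentialGrowth (P := P) (fun n => ?_) (fun n h => ?_) ?_ hS ?_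
  · exact degree_le_of_natDegree_le (natDegree_orthonormalPoly_le _ _ n)
  · exact (prod_jacobiA_pos hf n ω).ne' <| by rw [← hcoeff, h, abs_zero, inv_zero]
  · simpa only [hcoeff] using hA
  · filter_upwards [(ae_restrict_iff' hS.measurableSet).1 hlyap] with E hE hES
    exact hasSubexponentialGrowth_eval_orthonormalPoly (fun ω => (hf ω).ne') (hE hES)

variable [MeasurableSpace Ω]

theorem measurable_jacobiA (hf : Measurable f) (hT : Measurable T) :
    ∀ n, Measurable (jacobiA f T n)
  | 0 => measurable_const
  | n + 1 => hf.comp (hT.iterate (n + 1))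

theorem measurable_jacobiB (hg : Measurable g) (hT : Measurable T) (n : ℕ) :
    Measurable (jacobiB g T n) :=
  hg.comp (hT.iterate n)

theorem measurable_transferMatrix_apply (hf : Measurable f) (hg : Measurable g)
    (hT : Measurable T) (n : ℕ) (i j : Fin 2) :
    Measurable fun p : ℂ × Ω => transferMatrix f g T p.1 n p.2 i j := by
  have ha (k : ℕ) : Measurable fun p : ℂ × Ω => (jacobiA f T k p.2 : ℂ) :=
    Complex.measurable_ofReal.comp ((measurable_jacobiA hf hT k).comp measurable_snd)
  have hb : Measurable fun p : ℂ × Ω => (jacobiB g T n p.2 : ℂ) :=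
    Complex.measurable_ofReal.comp ((measurable_jacobiB hg hT n).comp measurable_snd)
  refine (ha n).inv.mul ?_
  fin_cases i <;> fin_cases j
  exacts [measurable_fst.sub hb, (ha (n - 1)).neg, ha n, measurable_const]

theorem measurable_transferCocycle_apply (hf : Measurable f) (hg : Measurable g)
    (hT : Measurable T) (n : ℕ) (i j : Fin 2) :
    Measurable fun p : ℂ × Ω => transferCocycle f g T p.1 p.2 n i j := by
  induction n generalizing i j with
  | zero => exact measurable_const
  | succ n ih =>
    simp only [transferCocycle, Matrix.mul_apply]
    exact Finset.measurable_fun_sum _ fun k _ =>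
      (measurable_transferMatrix_apply hf hg hT (n + 1) i k).mul (ih k j)

theorem measurable_norm_transferCocycle (hf : Measurable f) (hg : Measurable g)
    (hT : Measurable T) (n : ℕ) :
    Measurable fun p : ℂ × Ω => ‖transferCocycle f g T p.1 p.2 n‖ := by
  have hentry : Measurable fun (p : ℂ × Ω) (i j : Fin 2) => transferCocycle f g T p.1 p.2 n i j :=
    measurable_pi_iff.2 fun i => measurable_pi_iff.2 fun j =>
      measurable_transferCocycle_apply hf hg hT n i j
  exact hentry.norm

theorem ae_ae_tendsto_log_norm_transferCocycle (hf : Measurable f) (hg : Measurable g)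
    (hT : Measurable T) {μ : Measure Ω} [SFinite μ] {ν : Measure ℝ} [SFinite ν] {l : ℝ}
    (h : ∀ᵐ E : ℝ ∂ν, ∀ᵐ ω ∂μ, Tendsto
      (fun n : ℕ => Real.log ‖transferCocycle f g T E ω n‖ / n) atTop (nhds l)) :
    ∀ᵐ ω ∂μ, ∀ᵐ E : ℝ ∂ν, Tendsto
      (fun n : ℕ => Real.log ‖transferCocycle f g T E ω n‖ / n) atTop (nhds l) := by
  have hcast : Measurable fun p : ℝ × Ω => ((p.1 : ℂ), p.2) :=
    (Complex.measurable_ofReal.comp measurable_fst).prodMk measurable_snd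
  have hnorm (n : ℕ) : Measurable fun p : ℝ × Ω => ‖transferCocycle f g T p.1 p.2 n‖ := by
    simpa only [Function.comp_def] using (measurable_norm_transferCocycle hf hg hT n).comp hcast
  refine (Measure.ae_ae_comm ?_).1 h
  exact measurableSet_tendsto _ fun n => (hnorm n).log.div_const _

end TransferCocycle

theorem volume_eq_ofReal_sSup_sub_sInf {S : Set ℝ} (hS : IsCompact S) (hord : S.OrdConnected) :
    volume S = ENNReal.ofReal (sSup S - sInf S) := by
  rcases S.eq_empty_or_nonempty with rfl | hne
  · simp
  · conv_lhs => rw [eq_Icc_of_connected_compact ⟨hne, hord.isPreconnected⟩ hS]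
    exact Real.volume_Icc

theorem zero_lyapunov_bounds_general {Ω : Type*} [MeasurableSpace Ω] {μ : Measure Ω} [SFinite μ]
    [NeZero μ] {T : Ω → Ω} (hT : Measurable T) {f g : Ω → ℝ} (hf : Measurable f)
    (hg : Measurable g) (hfpos : ∀ ω, 0 < f ω) {J : Ω → ellTwo →L[ℂ] ellTwo}
    (hsa : ∀ ω, IsSelfAdjoint (J ω))
    (hJ : ∀ ω, IsJacobiOp (fun n => jacobiA f T n ω) (fun n => jacobiB g T n ω) (J ω))
    {S : Set ℝ} (hS : ∀ᵐ ω ∂μ, spectrum ℝ (J ω) = S) {A : ℝ}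
    (hA : ∀ᵐ ω ∂μ, Tendsto (fun n : ℕ => (∏ i ∈ Finset.Icc 1 n, jacobiA f T i ω) ^ (n : ℝ)⁻¹)
      atTop (nhds A))
    (hlyap : ∀ᵐ E : ℝ ∂volume.restrict S, ∀ᵐ ω ∂μ, Tendsto
      (fun n : ℕ => Real.log ‖transferCocycle f g T E ω n‖ / n) atTop (nhds 0)) :
    volume S ≤ ENNReal.ofReal (4 * A) ∧ 4 * A ≤ sSup S - sInf S ∧
      (S.OrdConnected → sSup S - sInf S = 4 * A ∧ volume S = ENNReal.ofReal (4 * A)) := by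
  obtain ⟨ω, rfl, hAω, hω⟩ :=
    (hS.and (hA.and (ae_ae_tendsto_log_norm_transferCocycle hf hg hT hlyap))).exists
  have hcomp : IsCompact (spectrum ℝ (J ω)) := spectrum.isCompact (J ω)
  have hupper := volume_le_of_ae_tendsto_log_norm_transferCocycle hfpos hAω hcomp hω
  have hlower := (hJ ω).four_mul_le_sSup_sub_sInf_spectrum (hsa ω) (A := A) <| by
    simpa only [abs_of_pos (prod_jacobiA_pos hfpos _ ω)] using hAω
  refine ⟨hupper, hlower, fun hord => ?_⟩
  have hA0 : 0 ≤ A :=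
    ge_of_tendsto' hAω fun n => Real.rpow_nonneg (prod_jacobiA_pos hfpos n ω).le _
  have hvol := volume_eq_ofReal_sSup_sub_sInf hcomp hord
  have heq := ((ENNReal.ofReal_le_ofReal_iff (by positivity)).1 (hvol ▸ hupper)).antisymm hlower
  exact ⟨heq, heq ▸ hvol⟩

/-- Let `{J_ω}` be an ergodic family of Jacobi operators with almost-sure
spectrum `Σ`, Lyapunov exponent `L`, and `A = lim_{n→∞} (a_1(ω)⋯a_n(ω))^{1/n}` for a.e. `ω`,
and let `λ_m = min Σ`, `λ_M = max Σ`. If `L(E) = 0` for every `E ∈ Σ`, then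
`|Σ| ≤ 4A ≤ λ_M - λ_m`; if in addition `Σ` is an interval, then `λ_M - λ_m = |Σ| = 4A`. -/
theorem zero_lyapunov_bounds {Ω : Type*} [MeasurableSpace Ω] (μ : Measure Ω)
    [IsProbabilityMeasure μ] (T : Ω → Ω) (hT : Ergodic T μ)
    (f g : Ω → ℝ) (hf : Measurable f) (hg : Measurable g)
    (ε : ℝ) (hε : 0 < ε) (hfε : ∀ ω, ε ≤ f ω)
    (M : ℝ) (hfM : ∀ ω, |f ω| ≤ M) (hgM : ∀ ω, |g ω| ≤ M)
    (J : Ω → ellTwo →L[ℂ] ellTwo) (hsa : ∀ ω, IsSelfAdjoint (J ω))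
    (hJ : ∀ ω, IsJacobiOp (fun n => jacobiA f T n ω) (fun n => jacobiB g T n ω) (J ω))
    (S : Set ℝ) (hSc : IsCompact S)
    (hS : ∀ᵐ ω ∂μ, spectrum ℝ (J ω) = S)
    (L : ℂ → ℝ) (hLnn : ∀ z, 0 ≤ L z)
    (hL : ∀ z : ℂ, ∀ᵐ ω ∂μ,
      Tendsto (fun n : ℕ => Real.log ‖transferCocycle f g T z ω n‖ / n) atTop (nhds (L z)))
    (A : ℝ) (hA : 0 < A)
    (hAlim : ∀ᵐ ω ∂μ,
      Tendsto (fun n : ℕ => (∏ i ∈ Finset.Icc 1 n, jacobiA f T i ω) ^ ((n : ℝ)⁻¹)) atTop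
        (nhds A))
    (hL0 : ∀ E ∈ S, L (E : ℂ) = 0) :
    volume S ≤ ENNReal.ofReal (4 * A) ∧ 4 * A ≤ sSup S - sInf S ∧
      (S.OrdConnected → sSup S - sInf S = 4 * A ∧ volume S = ENNReal.ofReal (4 * A)) := 
  zero_lyapunov_bounds_general hT.measurable hf hg (fun ω => hε.trans_le (hfε ω)) hsa hJ hS hAlim
    (ae_restrict_of_forall_mem hSc.measurableSet fun E hE => by simpa only [hL0 E hE] using hL E)
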